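/- Let β > 0 and let p be the probability mass function on ℤ proportional to e^{−βj²} (the discrete Gaussian increment law). Then the moment generating function ψ(s) := Σ_{j∈ℤ} e^{sj} p(j) is finite for every s ∈ ℝ and equals ψ(s) = e^{s²/(4β)} · ( Σ_{j∈ℤ} e^{−β(j − s/(2β))²} ) / ( Σ_{j∈ℤ} e^{−βj²} ). Consequently, for every integer d ≥ 2, the almost-sure limit H of the spherical averages H_r of the free height field with increment law p on the rooted Cayley tree of order d satisfies super-exponential concentration: for every A > 0 there exists B = B(A) < ∞ with P(|H| ≥ s) ≤ B e^{−As} for all real s ≥ 0. -/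

import Mathlib

open MeasureTheory ProbabilityTheory Filter Finset Topology

noncomputable section

/-- A non-root vertex of the rooted Cayley tree of order `d`: the first step from the
root is one of `d+1` children, every further step one of `d` children. -/
abbrev Vertex (d : ℕ) : Type := Fin (d + 1) × List (Fin d)

/-- depth of a non-root vertex -/
def vdepth {d : ℕ} (v : Vertex d) : ℕ := v.2.length + 1

/-- the sphere `W_r` of radius `r ≥ 1`: all vertices of depth `r` -/
def sphereW (d r : ℕ) : Finset (Vertex d) :=
  (Finset.univ : Finset (Fin (d + 1) × (Fin (r - 1) → Fin d))).image
    (fun x => (x.1, List.ofFn x.2))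

/-- height at `v`: sum of the increments along the path from the root to `v`
(the prefixes of length `0,…,|v.2|` of the step list of `v` enumerate that path). -/
def heightAt {d : ℕ} {Ω : Type*} (Y : Vertex d → Ω → ℝ) (v : Vertex d) (ω : Ω) : ℝ :=
  ∑ k ∈ Finset.range (v.2.length + 1), Y (v.1, v.2.take k) ω

/-- spherical average `H_r` of the heights at depth `r` -/
def sphAvg (d : ℕ) {Ω : Type*} (Y : Vertex d → Ω → ℝ) (r : ℕ) (ω : Ω) : ℝ :=
  (((d + 1) * d ^ (r - 1) : ℕ) : ℝ)⁻¹ * ∑ v ∈ sphereW d r, heightAt Y v ω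

lemma summable_exp_mul_exp_neg_mul_int_sq {β : ℝ} (hβ : 0 < β) (s : ℝ) :
    Summable fun j : ℤ => Real.exp (s * j) * Real.exp (-β * (j : ℝ) ^ 2) := by
  have h := (summable_jacobiTheta₂_term_iff (((-s / (2 * Real.pi) : ℝ) : ℂ) * Complex.I)
    (((β / Real.pi : ℝ) : ℂ) * Complex.I)).2 (by
      simpa only [Complex.im_ofReal_mul, Complex.I_im, mul_one] using div_pos hβ Real.pi_pos)
  refine h.norm.congr fun j => ?_
  rw [norm_jacobiTheta₂_term, ← Real.exp_add]
  congr 1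
  simp only [Complex.im_ofReal_mul, Complex.I_im, mul_one]
  field_simp
  ring

lemma exp_mul_exp_neg_mul_sq {β : ℝ} (hβ : β ≠ 0) (s x : ℝ) :
    Real.exp (s * x) * Real.exp (-β * x ^ 2) =
      Real.exp (s ^ 2 / (4 * β)) * Real.exp (-β * (x - s / (2 * β)) ^ 2) := by
  rw [← Real.exp_add, ← Real.exp_add]
  congr 1
  field_simp
  ring

/-- By Poisson summation, a periodized Gaussian is maximal at the origin. -/
lemma tsum_exp_neg_mul_int_sub_sq_le {β : ℝ} (hβ : 0 < β) (c : ℝ) :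
    ∑' j : ℤ, Real.exp (-β * ((j : ℝ) - c) ^ 2) ≤ ∑' j : ℤ, Real.exp (-β * (j : ℝ) ^ 2) := by
  set a : ℝ := Real.pi / β with ha_def
  have ha : 0 < a := div_pos Real.pi_pos hβ
  have hdual : ∀ x : ℝ, (∑' n : ℤ, Complex.exp (-Real.pi * a * n ^ 2 +
      2 * Real.pi * (x * Complex.I) * n)) =
      ((1 / a ^ (1 / 2 : ℝ) * ∑' j : ℤ, Real.exp (-β * ((j : ℝ) - x) ^ 2) : ℝ) : ℂ) := by
    intro x
    rw [Complex.tsum_exp_neg_quadratic (by simpa using ha)]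
    push_cast [Complex.ofReal_cpow ha.le]
    congr 1
    refine tsum_congr fun n => ?_
    congr 1
    have h1 : (Complex.I * (x * Complex.I) : ℂ) = -x := by
      linear_combination (x : ℂ) * Complex.I_mul_I
    have h2 : (-Real.pi / a : ℂ) = -β := by
      rw [ha_def]
      push_cast
      have : (Real.pi : ℂ) ≠ 0 := by exact_mod_cast Real.pi_ne_zero
      have : (β : ℂ) ≠ 0 := by exact_mod_cast hβ.ne'
      field_simp
    rw [h1, h2, sub_eq_add_neg]
  have hnorm : ∀ x : ℝ, ∀ n : ℤ, ‖Complex.exp (-Real.pi * a * n ^ 2 +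
      2 * Real.pi * (x * Complex.I) * n)‖ = Real.exp (-(Real.pi * a) * (n : ℝ) ^ 2) := by
    intro x n
    rw [Complex.norm_exp]
    congr 1
    have : (-Real.pi * a * n ^ 2 + 2 * Real.pi * (x * Complex.I) * n : ℂ) =
        ((-(Real.pi * a) * (n : ℝ) ^ 2 : ℝ) : ℂ) + ((2 * Real.pi * x * n : ℝ) : ℂ) * Complex.I := by
      push_cast
      ring
    rw [this, Complex.add_re, Complex.re_ofReal_mul, Complex.ofReal_re, Complex.I_re, mul_zero,
      add_zero]
  have hpos : 0 < 1 / a ^ (1 / 2 : ℝ) := by positivity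
  have hzero : ∑' n : ℤ, Real.exp (-(Real.pi * a) * (n : ℝ) ^ 2) =
      1 / a ^ (1 / 2 : ℝ) * ∑' j : ℤ, Real.exp (-β * (j : ℝ) ^ 2) := by
    have h := hdual 0
    simp only [sub_zero] at h
    rw [← Complex.ofReal_inj, ← h, Complex.ofReal_tsum]
    refine tsum_congr fun n => ?_
    push_cast
    congr 1
    ring
  have hsum : Summable fun n : ℤ => Real.exp (-(Real.pi * a) * (n : ℝ) ^ 2) := by
    simpa using summable_exp_mul_exp_neg_mul_int_sq (mul_pos Real.pi_pos ha) 0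
  refine le_of_mul_le_mul_left ?_ hpos
  calc 1 / a ^ (1 / 2 : ℝ) * ∑' j : ℤ, Real.exp (-β * ((j : ℝ) - c) ^ 2)
      ≤ ‖∑' n : ℤ, Complex.exp (-Real.pi * a * n ^ 2 + 2 * Real.pi * (c * Complex.I) * n)‖ := by
        rw [hdual c, Complex.norm_real]
        exact Real.le_norm_self _
    _ ≤ ∑' n : ℤ, Real.exp (-(Real.pi * a) * (n : ℝ) ^ 2) := by
        refine (norm_tsum_le_tsum_norm ?_).trans_eq (tsum_congr (hnorm c))
        simpa only [hnorm c] using hsum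
    _ = _ := hzero

lemma tsum_exp_neg_mul_int_sq_pos {β : ℝ} (hβ : 0 < β) :
    0 < ∑' j : ℤ, Real.exp (-β * (j : ℝ) ^ 2) := by
  have h : Summable fun j : ℤ => Real.exp (-β * (j : ℝ) ^ 2) := by
    simpa using summable_exp_mul_exp_neg_mul_int_sq hβ 0
  exact h.tsum_pos (fun _ => (Real.exp_pos _).le) 0 (Real.exp_pos _)

/-- An integer-valued variable with the discrete Gaussian law of parameter `β` is sub-Gaussian
with variance proxy `1 / (2β)`. -/
lemma hasSubgaussianMGF_of_discreteGaussian {Ω : Type*} [MeasurableSpace Ω] {P : Measure Ω}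
    [IsProbabilityMeasure P] {β : ℝ} (hβ : 0 < β) {X : Ω → ℤ} (hX : Measurable X)
    (hlaw : ∀ j : ℤ, P {ω | X ω = j} = ENNReal.ofReal
      (Real.exp (-β * (j : ℝ) ^ 2) / ∑' k : ℤ, Real.exp (-β * (k : ℝ) ^ 2))) :
    HasSubgaussianMGF (fun ω => (X ω : ℝ)) (Real.toNNReal (1 / (2 * β))) P := by
  have hZ := tsum_exp_neg_mul_int_sq_pos hβ
  set Z := ∑' k : ℤ, Real.exp (-β * (k : ℝ) ^ 2)
  have hmass : ∀ j : ℤ, (P.map X).real {j} = Real.exp (-β * (j : ℝ) ^ 2) / Z := fun j => by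
    rw [map_measureReal_apply hX (measurableSet_singleton j), measureReal_def]
    change (P {ω | X ω = j}).toReal = _
    rw [hlaw, ENNReal.toReal_ofReal (by positivity)]
  have hexp : ∀ t : ℝ, Integrable (fun j : ℤ => Real.exp (t * (j : ℝ))) (P.map X) := fun t => by
    rw [← Measure.sum_smul_dirac (P.map X)]
    refine integrable_sum_dirac (fun j => measure_ne_top _ _) ?_
    refine ((summable_exp_mul_exp_neg_mul_int_sq hβ t).div_const Z).congr fun j => ?_
    rw [← measureReal_def, hmass, Real.norm_eq_abs, Real.abs_exp]
    ring
  refine HasSubgaussianMGF.of_map (X := fun j : ℤ => (j : ℝ)) hX.aemeasurable ⟨hexp, fun t => ?_⟩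
  rw [mgf, integral_countable (hexp t)]
  simp only [hmass, smul_eq_mul]
  calc ∑' j : ℤ, Real.exp (-β * (j : ℝ) ^ 2) / Z * Real.exp (t * j)
      = ∑' j : ℤ, Real.exp (t ^ 2 / (4 * β)) / Z * Real.exp (-β * ((j : ℝ) - t / (2 * β)) ^ 2) :=
        tsum_congr fun j => by
          rw [div_mul_eq_mul_div, div_mul_eq_mul_div, mul_comm, exp_mul_exp_neg_mul_sq hβ.ne']
    _ ≤ Real.exp (t ^ 2 / (4 * β)) / Z * Z := by
        rw [tsum_mul_left]
        gcongr
        exact tsum_exp_neg_mul_int_sub_sq_le hβ _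
    _ = Real.exp (Real.toNNReal (1 / (2 * β)) * t ^ 2 / 2) := by
        rw [div_mul_cancel₀ _ hZ.ne', Real.coe_toNNReal _ (by positivity)]
        congr 1
        field_simp
        norm_num

lemma sum_sphereW {M : Type*} [AddCommMonoid M] (d r : ℕ) (f : Vertex d → M) :
    ∑ v ∈ sphereW d r, f v =
      ∑ a : Fin (d + 1), ∑ g : Fin (r - 1) → Fin d, f (a, List.ofFn g) := by
  rw [sphereW, Finset.sum_image, ← Finset.univ_product_univ, Finset.sum_product]
  rintro ⟨a, g⟩ - ⟨b, h⟩ - hab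
  simp only [Prod.mk.injEq] at hab ⊢
  exact ⟨hab.1, List.ofFn_injective hab.2⟩

lemma card_sphereW (d r : ℕ) : (sphereW d r).card = (d + 1) * d ^ (r - 1) := by
  rw [Finset.card_eq_sum_ones, sum_sphereW]
  simp

lemma length_of_mem_sphereW {d r : ℕ} {v : Vertex d} (hv : v ∈ sphereW d r) :
    v.2.length = r - 1 := by
  obtain ⟨x, -, rfl⟩ := Finset.mem_image.1 hv
  simp

lemma heightAt_append {d : ℕ} {Ω : Type*} (Y : Vertex d → Ω → ℝ) (a : Fin (d + 1))
    (l : List (Fin d)) (x : Fin d) (ω : Ω) :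
    heightAt Y (a, l ++ [x]) ω = heightAt Y (a, l) ω + Y (a, l ++ [x]) ω := by
  simp only [heightAt, List.length_append, List.length_singleton]
  rw [Finset.sum_range_succ]
  congr 1
  · refine Finset.sum_congr rfl fun k hk => ?_
    rw [List.take_append_of_le_length (Nat.lt_succ_iff.1 (Finset.mem_range.1 hk))]
  · rw [List.take_of_length_le (by simp)]

lemma sum_ofFn_succ {α M : Type*} [Fintype α] [AddCommMonoid M] (n : ℕ) (f : List α → M) :
    ∑ g : Fin (n + 1) → α, f (List.ofFn g) =
      ∑ g : Fin n → α, ∑ x : α, f (List.ofFn g ++ [x]) := by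
  rw [← (Fin.snocEquiv fun _ : Fin (n + 1) => α).sum_comp, ← Finset.univ_product_univ,
    Finset.sum_product, Finset.sum_comm]
  refine Finset.sum_congr rfl fun g _ => Finset.sum_congr rfl fun x _ => ?_
  rw [List.ofFn_succ', List.concat_eq_append]
  simp [Fin.snocEquiv]

lemma sphAvg_succ_succ {d : ℕ} (hd : d ≠ 0) {Ω : Type*} (Y : Vertex d → Ω → ℝ) (n : ℕ) (ω : Ω) :
    sphAvg d Y (n + 2) ω = sphAvg d Y (n + 1) ω +
      (((d + 1) * d ^ (n + 1) : ℕ) : ℝ)⁻¹ * ∑ v ∈ sphereW d (n + 2), Y v ω := by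
  have h : ∑ v ∈ sphereW d (n + 2), heightAt Y v ω =
      d * ∑ v ∈ sphereW d (n + 1), heightAt Y v ω + ∑ v ∈ sphereW d (n + 2), Y v ω := by
    rw [sum_sphereW, sum_sphereW, sum_sphereW, Finset.mul_sum, ← Finset.sum_add_distrib]
    refine Finset.sum_congr rfl fun a _ => ?_
    erw [sum_ofFn_succ n fun l => heightAt Y (a, l) ω, sum_ofFn_succ n fun l => Y (a, l) ω,
      Finset.mul_sum, ← Finset.sum_add_distrib]
    refine Finset.sum_congr rfl fun g _ => ?_
    simp [heightAt_append, Finset.sum_add_distrib]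
  have hd' : (d : ℝ) ≠ 0 := Nat.cast_ne_zero.2 hd
  have hd1 : (d : ℝ) + 1 ≠ 0 := by positivity
  simp only [sphAvg]
  rw [h]
  simp only [show n + 2 - 1 = n + 1 from rfl, Nat.add_sub_cancel]
  push_cast
  field_simp
  ring

lemma sphAvg_succ_eq_sum {d : ℕ} (hd : d ≠ 0) {Ω : Type*} (Y : Vertex d → Ω → ℝ) (n : ℕ) (ω : Ω) :
    sphAvg d Y (n + 1) ω = ∑ k ∈ Finset.range (n + 1),
      (((d + 1) * d ^ k : ℕ) : ℝ)⁻¹ * ∑ v ∈ sphereW d (k + 1), Y v ω := by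
  induction n with
  | zero =>
    simp [sphAvg, sum_sphereW, heightAt]
  | succ n ih => rw [sphAvg_succ_succ hd, ih, Finset.sum_range_succ _ (n + 1)]

/-- The vertices of depth between `1` and `n`. -/
def ballW (d n : ℕ) : Finset (Vertex d) :=
  (Finset.range n).biUnion fun k => sphereW d (k + 1)

lemma sum_ballW {M : Type*} [AddCommMonoid M] (d n : ℕ) (f : Vertex d → M) :
    ∑ v ∈ ballW d n, f v = ∑ k ∈ Finset.range n, ∑ v ∈ sphereW d (k + 1), f v := by
  refine Finset.sum_biUnion fun i _ j _ hij => Finset.disjoint_left.2 fun v hi hj => hij ?_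
  have h1 := length_of_mem_sphereW hi
  have h2 := length_of_mem_sphereW hj
  omega

/-- The weight `1 / |W_r|` of a vertex at depth `r` in the spherical averages. -/
def sphereWeight {d : ℕ} (v : Vertex d) : ℝ := (((d + 1) * d ^ v.2.length : ℕ) : ℝ)⁻¹

lemma sphereWeight_of_mem {d k : ℕ} {v : Vertex d} (hv : v ∈ sphereW d (k + 1)) :
    sphereWeight v = (((d + 1) * d ^ k : ℕ) : ℝ)⁻¹ := by
  rw [sphereWeight, length_of_mem_sphereW hv, Nat.add_sub_cancel]

lemma sphAvg_succ_eq_sum_ballW {d : ℕ} (hd : d ≠ 0) {Ω : Type*} (Y : Vertex d → Ω → ℝ) (n : ℕ)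
    (ω : Ω) :
    sphAvg d Y (n + 1) ω = ∑ v ∈ ballW d (n + 1), sphereWeight v * Y v ω := by
  rw [sphAvg_succ_eq_sum hd, sum_ballW]
  refine Finset.sum_congr rfl fun k _ => ?_
  rw [Finset.mul_sum]
  exact Finset.sum_congr rfl fun v hv => by rw [sphereWeight_of_mem hv]

lemma sum_sphereWeight_sq_le {d : ℕ} (hd : 2 ≤ d) (n : ℕ) :
    ∑ v ∈ ballW d n, sphereWeight v ^ 2 ≤ 1 := by
  have hsphere : ∀ k : ℕ, ∑ v ∈ sphereW d (k + 1), sphereWeight v ^ 2 ≤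
      (1 / 2) * (1 / 2 : ℝ) ^ k := by
    intro k
    have hpos : (0 : ℝ) < ((d + 1) * d ^ k : ℕ) := by positivity
    rw [Finset.sum_congr rfl fun v hv => by rw [sphereWeight_of_mem hv], Finset.sum_const,
      card_sphereW, Nat.add_sub_cancel, nsmul_eq_mul, sq, mul_inv_cancel_left₀ hpos.ne',
      ← pow_succ', one_div, inv_pow]
    refine inv_anti₀ (by positivity) ?_
    have h : 2 ^ (k + 1) ≤ (d + 1) * d ^ k := by
      rw [pow_succ']
      exact Nat.mul_le_mul (by omega) (Nat.pow_le_pow_left hd k)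
    exact_mod_cast h
  rw [sum_ballW]
  refine (Finset.sum_le_sum fun k _ => hsphere k).trans ?_
  rw [← Finset.mul_sum]
  linarith [sum_geometric_two_le n]

/-- Sub-Gaussian bounds with a common variance proxy pass to almost sure limits. -/
lemma hasSubgaussianMGF_of_tendsto {Ω : Type*} [MeasurableSpace Ω] {P : Measure Ω} {c : NNReal}
    {X : ℕ → Ω → ℝ} {Z : Ω → ℝ} (hX : ∀ n, HasSubgaussianMGF (X n) c P)
    (hlim : ∀ᵐ ω ∂P, Tendsto (fun n => X n ω) atTop (𝓝 (Z ω))) : HasSubgaussianMGF Z c P := by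
  have hZ : AEMeasurable Z P := aemeasurable_of_tendsto_metrizable_ae' (fun n => (hX n).aemeasurable)
    hlim
  have hbound : ∀ t : ℝ, ∫⁻ ω, ENNReal.ofReal (Real.exp (t * Z ω)) ∂P ≤
      ENNReal.ofReal (Real.exp (c * t ^ 2 / 2)) := by
    intro t
    calc ∫⁻ ω, ENNReal.ofReal (Real.exp (t * Z ω)) ∂P
        = ∫⁻ ω, liminf (fun n => ENNReal.ofReal (Real.exp (t * X n ω))) atTop ∂P := by
          refine lintegral_congr_ae ?_
          filter_upwards [hlim] with ω hω
          refine (Tendsto.liminf_eq ?_).symm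
          exact ENNReal.tendsto_ofReal ((Real.continuous_exp.tendsto _).comp (hω.const_mul t))
      _ ≤ liminf (fun n => ∫⁻ ω, ENNReal.ofReal (Real.exp (t * X n ω)) ∂P) atTop :=
          lintegral_liminf_le' fun n =>
            ((hX n).integrable_exp_mul t).aestronglyMeasurable.aemeasurable.ennreal_ofReal
      _ ≤ ENNReal.ofReal (Real.exp (c * t ^ 2 / 2)) := by
          refine liminf_le_of_le (by isBoundedDefault) fun b hb => ?_
          obtain ⟨n, hn⟩ := hb.exists
          refine hn.trans ?_
          rw [← ofReal_integral_eq_lintegral_ofReal ((hX n).integrable_exp_mul t)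
            (ae_of_all _ fun _ => (Real.exp_pos _).le)]
          exact ENNReal.ofReal_le_ofReal ((hX n).mgf_le t)
  have hmeas : ∀ t : ℝ, AEStronglyMeasurable (fun ω => Real.exp (t * Z ω)) P := fun t =>
    (Real.measurable_exp.comp_aemeasurable (hZ.const_mul t)).aestronglyMeasurable
  refine ⟨fun t => ⟨hmeas t, ?_⟩, fun t => ?_⟩
  · rw [hasFiniteIntegral_iff_ofReal (ae_of_all _ fun _ => (Real.exp_pos _).le)]
    exact (hbound t).trans_lt ENNReal.ofReal_lt_top
  · rw [mgf, integral_eq_lintegral_of_nonneg_ae (ae_of_all _ fun _ => (Real.exp_pos _).le) (hmeas t)]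
    exact ENNReal.toReal_le_of_le_ofReal (Real.exp_pos _).le (hbound t)

lemma hasSubgaussianMGF_measure_le_abs_le {Ω : Type*} [MeasurableSpace Ω] {P : Measure Ω}
    [IsProbabilityMeasure P] {c : NNReal} {X : Ω → ℝ} (hX : HasSubgaussianMGF X c P) {A : ℝ}
    (hA : 0 ≤ A) (s : ℝ) :
    P {ω | s ≤ |X ω|} ≤ ENNReal.ofReal (2 * Real.exp (c * A ^ 2 / 2) * Real.exp (-A * s)) := by
  have tail : ∀ {U : Ω → ℝ}, HasSubgaussianMGF U c P →
      P.real {ω | s ≤ U ω} ≤ Real.exp (-A * s) * Real.exp (c * A ^ 2 / 2) := fun hU =>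
    (measure_ge_le_exp_mul_mgf s hA (hU.integrable_exp_mul A)).trans
      (mul_le_mul_of_nonneg_left (hU.mgf_le A) (Real.exp_pos _).le)
  have hsub : {ω | s ≤ |X ω|} ⊆ {ω | s ≤ X ω} ∪ {ω | s ≤ (-X) ω} := fun ω hω => by
    simpa [le_abs] using hω
  rw [← ofReal_measureReal]
  refine ENNReal.ofReal_le_ofReal ?_
  have h := (measureReal_mono (μ := P) hsub).trans (measureReal_union_le _ _)
  linarith [tail hX, tail hX.neg]

lemma hasSubgaussianMGF_sphAvg {Ω : Type*} [MeasurableSpace Ω] {P : Measure Ω} {d : ℕ}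
    (hd : 2 ≤ d) {c : NNReal} {Y : Vertex d → Ω → ℝ} (hindep : iIndepFun Y P)
    (hY : ∀ v, HasSubgaussianMGF (Y v) c P) (n : ℕ) :
    HasSubgaussianMGF (sphAvg d Y (n + 1)) c P := by
  have hsum := HasSubgaussianMGF.sum_of_iIndepFun (s := ballW d (n + 1))
    (hindep.comp (fun v x => sphereWeight v * x) fun v => measurable_const_mul _)
    (c := fun v => Real.toNNReal (sphereWeight v ^ 2) * c)
    fun v _ => by
      rw [Real.toNNReal_of_nonneg (sq_nonneg _)]
      exact (hY v).const_mul (sphereWeight v)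
  have heq : sphAvg d Y (n + 1) = fun ω => ∑ v ∈ ballW d (n + 1), sphereWeight v * Y v ω :=
    funext fun ω => sphAvg_succ_eq_sum_ballW (by omega) Y n ω
  rw [heq]
  refine ⟨hsum.integrable_exp_mul, fun t => (hsum.mgf_le t).trans (Real.exp_le_exp.2 ?_)⟩
  have hcoe : ((∑ v ∈ ballW d (n + 1), Real.toNNReal (sphereWeight v ^ 2) * c : NNReal) : ℝ) =
      (∑ v ∈ ballW d (n + 1), sphereWeight v ^ 2) * c := by
    simp [Finset.sum_mul, Real.coe_toNNReal _ (sq_nonneg _)]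
  rw [hcoe]
  have h := sum_sphereWeight_sq_le hd (n + 1)
  have h' : (∑ v ∈ ballW d (n + 1), sphereWeight v ^ 2) * (c * t ^ 2) ≤ 1 * (c * t ^ 2) :=
    mul_le_mul_of_nonneg_right h (by positivity)
  linarith

/-- For the discrete Gaussian increment law `p(j) = e^{-βj²}/Z`, the mgf
`ψ(s) = Σ_j e^{sj} p(j)` is finite for all `s` and equals
`e^{s²/(4β)} · Σ_j e^{-β(j-s/(2β))²} / Σ_j e^{-βj²}`; consequently, on the rooted Cayley tree
of order `d ≥ 2`, the a.s. limit `H` of the spherical averages of the free height field has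
super-exponential tails: for every `A > 0`, `P(|H| ≥ s) ≤ B(A) e^{-As}` for all `s ≥ 0`. -/
theorem discrete_gaussian_mgf_and_superexponential_tail
    {Ω : Type} [MeasurableSpace Ω] (P : Measure Ω) [IsProbabilityMeasure P]
    (d : ℕ) (hd : 2 ≤ d)
    (β : ℝ) (hβ : 0 < β)
    (p : ℤ → ℝ)
    (hp : ∀ j : ℤ, p j = Real.exp (-β * (j : ℝ) ^ 2) / ∑' k : ℤ, Real.exp (-β * (k : ℝ) ^ 2))
    (Y : Vertex d → Ω → ℤ) (hmeas : ∀ v, Measurable (Y v))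
    (hindep : iIndepFun Y P)
    (hlaw : ∀ v (j : ℤ), P {ω | Y v ω = j} = ENNReal.ofReal (p j))
    (H : Ω → ℝ) (hHmeas : Measurable H)
    (hH : ∀ᵐ ω ∂P, Tendsto (fun r => sphAvg d (fun v ω => (Y v ω : ℝ)) r ω) atTop (𝓝 (H ω))) :
    (∀ s : ℝ, Summable (fun j : ℤ => Real.exp (s * j) * p j)) ∧
    (∀ s : ℝ,
      ∑' j : ℤ, Real.exp (s * j) * p j =
        Real.exp (s ^ 2 / (4 * β)) *
          (∑' j : ℤ, Real.exp (-β * ((j : ℝ) - s / (2 * β)) ^ 2)) /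
          (∑' j : ℤ, Real.exp (-β * (j : ℝ) ^ 2))) ∧
    (∀ A : ℝ, 0 < A →
      ∃ B : ℝ, 0 ≤ B ∧ ∀ s : ℝ, 0 ≤ s →
        P {ω | s ≤ |H ω|} ≤ ENNReal.ofReal (B * Real.exp (-A * s))) := by
  refine ⟨fun s => ?_, fun s => ?_, fun A hA => ?_⟩
  · simp only [hp, ← mul_div_assoc]
    exact (summable_exp_mul_exp_neg_mul_int_sq hβ s).div_const _
  · simp only [hp, ← mul_div_assoc, exp_mul_exp_neg_mul_sq hβ.ne']
    rw [tsum_div_const, tsum_mul_left]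
  · have hY : ∀ v, HasSubgaussianMGF (fun ω => (Y v ω : ℝ)) (Real.toNNReal (1 / (2 * β))) P :=
      fun v => hasSubgaussianMGF_of_discreteGaussian hβ (hmeas v) fun j => by rw [hlaw, hp]
    have hindep' : iIndepFun (fun v ω => (Y v ω : ℝ)) P :=
      hindep.comp (fun _ j => (j : ℝ)) fun _ => measurable_from_top
    have hlim : HasSubgaussianMGF H (Real.toNNReal (1 / (2 * β))) P :=
      hasSubgaussianMGF_of_tendsto (hasSubgaussianMGF_sphAvg hd hindep' hY)
        (hH.mono fun ω hω => hω.comp (tendsto_add_atTop_nat 1))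
    exact ⟨_, by positivity, fun s _ => hasSubgaussianMGF_measure_le_abs_le hlim hA.le s⟩
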